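/- Existence of a greatest Markov equivalent directed graph: for every directed graph G = (V, E_d), the E-separation Markov equivalence class [G]_E of G contains a greatest element with respect to the partial order ⊆ on edge sets; that is, there exists a directed graph Ĝ over V with I_E^{Ĝ} = I_E^G such that every directed graph G′ over V with I_E^{G′} = I_E^G satisfies G′ ⊆ Ĝ. -/

import Mathlib

namespace ESepPaper

/-- A directed mixed graph: directed edges and bidirected edges over a node type `V`.
A directed graph (DG) is a DMG with `Ebi = ∅`. -/
structure DMG (V : Type) where
  Ed : Set (V × V)
  Ebi : Set (Sym2 V)

variable {V : Type}

/-- `G.ancestor u v` : there is a directed path `u → … → v` (possibly trivial). -/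
def DMG.ancestor (G : DMG V) : V → V → Prop :=
  Relation.ReflTransGen (fun u v => (u, v) ∈ G.Ed)

/-- Ancestors of a set `C`. -/
def DMG.anc (G : DMG V) (C : Set V) : Set V := {u | ∃ v ∈ C, G.ancestor u v}

/-- Strongly connected component of `v`. -/
def DMG.scc (G : DMG V) (v : V) : Set V := {w | G.ancestor w v ∧ G.ancestor v w}

/-- Parents of a set of nodes. -/
def DMG.pa (G : DMG V) (S : Set V) : Set V := {w | ∃ v ∈ S, (w, v) ∈ G.Ed}

/-- Kind of a traversed edge on a walk: forward directed, backward directed, or bidirected. -/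
inductive LinkType | fwd | bwd | bi
deriving DecidableEq

/-- Validity of a link of kind `t` between consecutive walk nodes `u` and `v`. -/
def DMG.linkOK (G : DMG V) (u v : V) : LinkType → Prop
  | .fwd => (u, v) ∈ G.Ed
  | .bwd => (v, u) ∈ G.Ed
  | .bi => s(u, v) ∈ G.Ebi

/-- Arrowhead at the second (right) endpoint of the link. -/
def LinkType.headR : LinkType → Prop
  | .fwd => True
  | .bwd => False
  | .bi => True

/-- Arrowhead at the first (left) endpoint of the link. -/
def LinkType.headL : LinkType → Prop
  | .fwd => False
  | .bwd => True
  | .bi => True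

/-- Tail at the second (right) endpoint. -/
def LinkType.tailR (t : LinkType) : Prop := t = .bwd

/-- Tail at the first (left) endpoint. -/
def LinkType.tailL (t : LinkType) : Prop := t = .fwd

/-- Walks in a DMG. -/
inductive DMG.Walk (G : DMG V) : V → V → Type
  | nil (v : V) : DMG.Walk G v v
  | cons {u v w : V} (t : LinkType) (h : G.linkOK u v t) (p : DMG.Walk G v w) : DMG.Walk G u w

/-- An interior node on a walk, whose incoming link is `t1` and outgoing link is `t2`,
is a collider iff both links have an arrowhead at it. -/
def colliderAt (t1 t2 : LinkType) : Prop := t1.headR ∧ t2.headL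

/-- An interior non-collider `v` between neighbours `u` (incoming link `t1`) and `w`
(outgoing link `t2`) is unblockable: on every side where the link has a tail at `v`, the
corresponding neighbour lies in `scc_G(v)` (left-chain/right-chain/fork cases). -/
def unblockableAt (G : DMG V) (u v w : V) (t1 t2 : LinkType) : Prop :=
  (t1.tailR → u ∈ G.scc v) ∧ (t2.tailL → w ∈ G.scc v)

namespace DMG.Walk

variable {G : DMG V}

/-- First node of a walk. -/
def first {a b : V} (_ : G.Walk a b) : V := a

def length : {a b : V} → G.Walk a b → ℕ
  | _, _, .nil _ => 0
  | _, _, .cons _ _ p => p.length + 1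

def support : {a b : V} → G.Walk a b → List V
  | a, _, .nil _ => [a]
  | a, _, .cons _ _ p => a :: p.support

/-- Auxiliary: σ-openness of the remainder of a walk, where `u` is the previous node and
`t1` the link from `u` into the current first node. -/
def sigmaOpenAux (C : Set V) : (u : V) → LinkType → {b c : V} → G.Walk b c → Prop
  | _, _, _, _, .nil _ => True
  | u, t1, v, _, .cons t2 _ q =>
      ((colliderAt t1 t2 → v ∈ G.anc C) ∧
       (¬ colliderAt t1 t2 → ¬ unblockableAt G u v q.first t1 t2 → v ∉ C)) ∧
      sigmaOpenAux C v t2 q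

/-- The walk is σ-open given `C`: every collider on it is an ancestor of a node of `C`, and
no blockable non-collider on it lies in `C`. -/
def sigmaOpen (C : Set V) : {a b : V} → G.Walk a b → Prop
  | _, _, .nil _ => True
  | a, _, .cons t _ q => sigmaOpenAux C a t q

/-- All links are forward directed. -/
def IsDirected : {a b : V} → G.Walk a b → Prop
  | _, _, .nil _ => True
  | _, _, .cons t _ p => t = .fwd ∧ p.IsDirected

/-- Interior nodes of the walk (all nodes except the two endpoints). -/
def interior {a b : V} (p : G.Walk a b) : List V := p.support.tail.dropLast

/-- Arrowhead at the first endpoint. -/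
def headAtStart : {a b : V} → G.Walk a b → Prop
  | _, _, .nil _ => False
  | _, _, .cons t _ _ => t.headL

def headAtEndAux : LinkType → {a b : V} → G.Walk a b → Prop
  | t, _, _, .nil _ => t.headR
  | _, _, _, .cons t _ q => headAtEndAux t q

/-- Arrowhead at the last endpoint. -/
def headAtEnd : {a b : V} → G.Walk a b → Prop
  | _, _, .nil _ => False
  | _, _, .cons t _ q => headAtEndAux t q

def noCollidersAux : LinkType → {a b : V} → G.Walk a b → Prop
  | _, _, _, .nil _ => True
  | t1, _, _, .cons t2 _ q => ¬ colliderAt t1 t2 ∧ noCollidersAux t2 q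

/-- There is no collider on the walk. -/
def NoColliders : {a b : V} → G.Walk a b → Prop
  | _, _, .nil _ => True
  | _, _, .cons t _ q => noCollidersAux t q

def collidersInAux (S : Set V) : LinkType → {a b : V} → G.Walk a b → Prop
  | _, _, _, .nil _ => True
  | t1, v, _, .cons t2 _ q => (colliderAt t1 t2 → v ∈ S) ∧ collidersInAux S t2 q

/-- Every collider on the walk lies in `S`. -/
def CollidersIn (S : Set V) : {a b : V} → G.Walk a b → Prop
  | _, _, .nil _ => True
  | _, _, .cons t _ q => collidersInAux S t q

def noncollUnblAux : (u : V) → LinkType → {b c : V} → G.Walk b c → Prop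
  | _, _, _, _, .nil _ => True
  | u, t1, v, _, .cons t2 _ q =>
      (¬ colliderAt t1 t2 → unblockableAt G u v q.first t1 t2) ∧ noncollUnblAux v t2 q

/-- Every interior non-collider on the walk is unblockable. -/
def NoncollidersUnblockable : {a b : V} → G.Walk a b → Prop
  | _, _, .nil _ => True
  | a, _, .cons t _ q => noncollUnblAux a t q

/-- The set of edges occurring on a walk (directed edges as ordered pairs in `E_d`,
bidirected edges as unordered pairs). -/
def edges : {a b : V} → G.Walk a b → Set ((V × V) ⊕ Sym2 V)
  | _, _, .nil _ => ∅
  | a, _, .cons t _ p =>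
      insert (match t with
        | .fwd => Sum.inl (a, p.first)
        | .bwd => Sum.inl (p.first, a)
        | .bi => Sum.inr s(a, p.first)) p.edges

/-- Concatenation of walks. -/
def append : {a b c : V} → G.Walk a b → G.Walk b c → G.Walk a c
  | _, _, _, .nil _, q => q
  | _, _, _, .cons t h p, q => .cons t h (p.append q)

/-- A walk `v_0, …, v_{n+1}` is a path if no node besides the final endpoint occurs more
than once, i.e. `v_0, …, v_n` are pairwise distinct. -/
def IsPath {a b : V} (p : G.Walk a b) : Prop := p.support.dropLast.Nodup

end DMG.Walk

/-- `A` is σ-separated from `B` given `C` in `G`: every walk from a node of `A` to a node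
of `B` is σ-blocked given `C`. -/
def DMG.sigmaSep (G : DMG V) (A B C : Set V) : Prop :=
  ∀ a ∈ A, ∀ b ∈ B, ∀ p : G.Walk a b, ¬ p.sigmaOpen C

/-- The lifted dependency graph of `G`, on two copies of `V`
(`Sum.inl` is the past copy `V_0`, `Sum.inr` the future copy `V_1`). -/
def DMG.lift (G : DMG V) : DMG (V ⊕ V) where
  Ed := {e | ∃ u v, (u, v) ∈ G.Ed ∧
        (e = (Sum.inl u, Sum.inl v) ∨ e = (Sum.inl u, Sum.inr v) ∨
         e = (Sum.inr u, Sum.inr v))}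
  Ebi := {e | ∃ u v, s(u, v) ∈ G.Ebi ∧
        (e = s(Sum.inl u, Sum.inl v) ∨ e = s(Sum.inl u, Sum.inr v) ∨
         e = s(Sum.inr u, Sum.inl v) ∨ e = s(Sum.inr u, Sum.inr v))}

/-- `B` is E-separated from `A` given `C` in `G`:
`A_0` is σ-separated from `B_1` given `C_0 ∪ (C_1 \ B_1)` in the lifted dependency graph. -/
def DMG.ESep (G : DMG V) (A B C : Set V) : Prop :=
  G.lift.sigmaSep (Sum.inl '' A) (Sum.inr '' B)
    ((Sum.inl '' C) ∪ ((Sum.inr '' C) \ (Sum.inr '' B)))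

/-- The independence model `I_E^G` of E-separation triples. -/
def DMG.IE (G : DMG V) : Set (Set V × Set V × Set V) :=
  {t | G.ESep t.1 t.2.1 t.2.2}


/-- The latent projection of `G` onto the observed nodes `O`: a directed edge when there is
a non-trivial directed walk whose interior nodes are all latent, and a bidirected edge when
there is a non-trivial collider-free walk with arrowheads at both endpoints whose interior
nodes are all latent. -/
def DMG.latentProj (G : DMG V) (O : Set V) : DMG O where
  Ed := {e | ∃ p : G.Walk e.1.val e.2.val,
          p.IsDirected ∧ 0 < p.length ∧ ∀ x ∈ p.interior, x ∉ O}
  Ebi := {e | ∃ u v : O, e = s(u, v) ∧ ∃ p : G.Walk u.val v.val,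
          p.headAtStart ∧ p.headAtEnd ∧ p.NoColliders ∧ 0 < p.length ∧
          ∀ x ∈ p.interior, x ∉ O}

/-- The last edge of the walk `p` before entering `scc_G(w)` has an arrowhead at its
endpoint in `scc_G(w)` (vacuous if the walk never leaves `scc_G(w)`). -/
def DMG.lastEdgeInto (G : DMG V) {a b : V} (w : V) (p : G.Walk a b) : Prop :=
  (∀ x ∈ p.support, x ∈ G.scc w) ∨
  ∃ (x y : V) (t : LinkType) (h : G.linkOK x y t) (p₁ : G.Walk a x) (p₂ : G.Walk y b),
    p = p₁.append (.cons t h p₂) ∧ x ∉ G.scc w ∧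
    (∀ z ∈ p₂.support, z ∈ G.scc w) ∧ t.headR

/-- An (asymmetric) inducing path from `v` to `w`: a non-trivial path such that every
collider on it is an ancestor of `v` or `w`, every interior non-collider is unblockable,
and the last edge before entering `scc_G(w)` points into `scc_G(w)`. -/
def DMG.IsInducingPath (G : DMG V) {v w : V} (p : G.Walk v w) : Prop :=
  0 < p.length ∧ p.IsPath ∧
  p.CollidersIn (G.anc {v, w}) ∧ p.NoncollidersUnblockable ∧ G.lastEdgeInto w p

theorem anc_trans {W : Type} {L : DMG W} {a b c : W} (h : L.ancestor a b) (h' : L.ancestor b c) :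
    L.ancestor a c := Relation.ReflTransGen.trans h h'

theorem anc_edge {W : Type} {L : DMG W} {a b : W} (h : (a, b) ∈ L.Ed) :
    L.ancestor a b := Relation.ReflTransGen.single h

theorem segF {W : Type} {L : DMG W} {y b c : W} (h : L.ancestor y b) (hb : L.ancestor b y)
    (q : L.Walk b c) : ∃ q' : L.Walk y c, ∀ C : Set W,
      (∀ u, q.sigmaOpenAux C u .fwd) → ∀ u, q'.sigmaOpenAux C u .fwd := by
  induction h using Relation.ReflTransGen.head_induction_on with
  | refl => exact ⟨q, fun C h => h⟩
  | head hxy hyb ih =>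
    rename_i x y
    obtain ⟨q', hq'⟩ := ih (anc_trans hb (anc_edge hxy))
    refine ⟨.cons .fwd hxy q', fun C hC u => ⟨⟨fun hc => hc.2.elim, fun _ hn => (hn ?_).elim⟩, hq' C hC _⟩⟩
    exact ⟨(fun h => by cases h), fun _ => ⟨anc_trans hyb hb, anc_edge hxy⟩⟩

theorem segB {W : Type} {L : DMG W} {y b v c : W} (h : L.ancestor y b) (hb : L.ancestor b y)
    (hv : (v, y) ∈ L.Ed) (q : L.Walk v c) : ∃ q' : L.Walk b c, ∀ C : Set W,
      (∀ u' ∈ L.scc b, q.sigmaOpenAux C u' .bwd) →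
      q'.sigmaOpen C ∧
      ∀ u t, (colliderAt t .bwd → b ∈ L.anc C) →
        (¬ colliderAt t .bwd → ¬ (t.tailR → u ∈ L.scc b) → b ∉ C) → q'.sigmaOpenAux C u t := by
  induction h with
  | refl =>
    refine ⟨.cons .bwd hv q, fun C hq => ⟨hq _ ⟨hb, hb⟩, fun u t h1 h2 => ⟨⟨h1, fun hc hn => h2 hc ?_⟩, hq _ ⟨hb, hb⟩⟩⟩⟩
    intro h; exact hn ⟨h, fun h => by cases h⟩
  | tail hyb hbc ih =>
    rename_i b0 b
    have hb0 : L.ancestor b b0 := anc_trans hb hyb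
    have hb1 : L.ancestor b0 b := anc_edge hbc
    obtain ⟨q', hq'⟩ := ih (anc_trans hb1 hb)
    refine ⟨.cons .bwd hbc q', fun C hq => ?_⟩
    have key : q'.sigmaOpenAux C b .bwd := by
      refine (hq' C fun u' hu' => hq u' ⟨anc_trans hu'.1 hb1, anc_trans hb0 hu'.2⟩).2 _ _
        (fun h => h.1.elim) (fun _ hn => (hn fun _ => ⟨hb0, hb1⟩).elim)
    refine ⟨key, fun u t h1 h2 => ⟨⟨h1, fun hc hn => h2 hc ?_⟩, key⟩⟩
    intro h; exact hn ⟨h, fun h => by cases h⟩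

structure SccExt {W : Type} (L L' : DMG W) : Prop where
  bi : L.Ebi = L'.Ebi
  sub : L.Ed ⊆ L'.Ed
  ext : ∀ a b, (a, b) ∈ L'.Ed → ∃ y ∈ L.scc b, (a, y) ∈ L.Ed

theorem SccExt.anc_iff {W : Type} {L L' : DMG W} (H : SccExt L L') (a b : W) :
    L'.ancestor a b ↔ L.ancestor a b := by
  constructor
  · intro h
    induction h with
    | refl => exact Relation.ReflTransGen.refl
    | tail _ h ih =>
      obtain ⟨y, hy, h⟩ := H.ext _ _ h
      exact anc_trans ih (anc_trans (anc_edge h) hy.1)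
  · intro h
    induction h with
    | refl => exact Relation.ReflTransGen.refl
    | tail _ h ih => exact Relation.ReflTransGen.tail ih (H.sub h)

theorem SccExt.scc_eq {W : Type} {L L' : DMG W} (H : SccExt L L') (a : W) :
    L'.scc a = L.scc a := by
  ext b; simp [DMG.scc, H.anc_iff]

theorem SccExt.anc_eq {W : Type} {L L' : DMG W} (H : SccExt L L') (C : Set W) :
    L'.anc C = L.anc C := by
  ext b; simp [DMG.anc, H.anc_iff]

theorem SccExt.up {W : Type} {L L' : DMG W} (H : SccExt L L') {b c : W} (p : L.Walk b c) :
    ∃ q : L'.Walk b c, ∀ C, (p.sigmaOpen C → q.sigmaOpen C) ∧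
      ∀ u t, p.sigmaOpenAux C u t → q.sigmaOpenAux C u t := by
  induction p with
  | nil v => exact ⟨.nil v, fun C => ⟨id, fun _ _ => id⟩⟩
  | cons t h p ih =>
    rename_i b v c
    obtain ⟨q, hq⟩ := ih
    have h' : L'.linkOK b v t := by
      cases t
      · exact H.sub h
      · exact H.sub h
      · exact (show _ ∈ L'.Ebi from H.bi ▸ (show _ ∈ L.Ebi from h))
    refine ⟨.cons t h' q, fun C => ⟨fun hp => (hq C).2 _ _ hp, fun u t' hp => ⟨?_, (hq C).2 _ _ hp.2⟩⟩⟩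
    have := hp.1
    simpa only [unblockableAt, H.scc_eq, H.anc_eq, DMG.Walk.first] using this

theorem scc_of_scc {W : Type} {L : DMG W} {x y z : W} (h : x ∈ L.scc y) : x ∈ L.scc z ↔ y ∈ L.scc z :=
  ⟨fun k => ⟨anc_trans h.2 k.1, anc_trans k.2 h.1⟩, fun k => ⟨anc_trans h.1 k.1, anc_trans k.2 h.2⟩⟩

theorem SccExt.down {W : Type} {L L' : DMG W} (H : SccExt L L') {b c : W} (p : L'.Walk b c) :
    ∃ q : L.Walk b c, ∀ C, (p.sigmaOpen C → q.sigmaOpen C) ∧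
      ∀ u t, p.sigmaOpenAux C u t → ∀ u', (t = .bwd → u' ∈ L.scc u) → q.sigmaOpenAux C u' t := by
  induction p with
  | nil v => exact ⟨.nil v, fun C => ⟨id, fun _ _ _ _ _ => trivial⟩⟩
  | cons t h p ih =>
    rename_i b v c
    obtain ⟨q, hq⟩ := ih
    cases t with
    | bi =>
      have h' : L.linkOK b v .bi := (show _ ∈ L.Ebi from H.bi ▸ (show _ ∈ L'.Ebi from h))
      refine ⟨.cons .bi h' q, fun C => ⟨fun hp => (hq C).2 _ _ hp _ (by simp), ?_⟩⟩
      rintro u t ⟨⟨h1, h2⟩, h3⟩ u' hu'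
      refine ⟨⟨by rwa [← H.anc_eq], fun hc hn => h2 hc fun hu => hn ⟨fun ht => ?_, fun h => by cases h⟩⟩,
        (hq C).2 _ _ h3 _ (by simp)⟩
      exact (scc_of_scc (hu' ht)).2 (H.scc_eq b ▸ hu.1 ht)
    | fwd =>
      obtain ⟨y, hy, hby⟩ := H.ext _ _ h
      obtain ⟨q', hq'⟩ := segF hy.1 hy.2 q
      refine ⟨.cons .fwd hby q', fun C => ⟨fun hp => hq' C (fun u => (hq C).2 _ _ hp _ (by simp)) _, ?_⟩⟩
      rintro u t ⟨⟨h1, h2⟩, h3⟩ u' hu'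
      refine ⟨⟨fun h => h.2.elim, fun hc hn => h2 hc fun hu => hn ⟨fun ht => ?_, fun ht => ?_⟩⟩,
        hq' C (fun u => (hq C).2 _ _ h3 _ (by simp)) _⟩
      · exact (scc_of_scc (hu' ht)).2 (H.scc_eq b ▸ hu.1 ht)
      · exact (scc_of_scc hy).2 (H.scc_eq b ▸ hu.2 ht)
    | bwd =>
      obtain ⟨y, hy, hby⟩ := H.ext _ _ h
      obtain ⟨q', hq'⟩ := segB hy.1 hy.2 hby q
      refine ⟨q', fun C => ⟨fun hp => (hq' C fun u' hu' => (hq C).2 _ _ hp _ fun _ => hu').1, ?_⟩⟩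
      rintro u t ⟨⟨h1, h2⟩, h3⟩ u' hu'
      refine (hq' C fun u' hu' => (hq C).2 _ _ h3 _ fun _ => hu').2 _ _ (by rwa [← H.anc_eq])
        fun hc hn => h2 hc fun hu => hn fun ht => ?_
      exact (scc_of_scc (hu' ht)).2 (H.scc_eq b ▸ hu.1 ht)

theorem SccExt.sep_iff {W : Type} {L L' : DMG W} (H : SccExt L L') (A B C : Set W) :
    L'.sigmaSep A B C ↔ L.sigmaSep A B C := by
  constructor
  · intro h a ha b hb p hp
    obtain ⟨q, hq⟩ := H.up p
    exact h a ha b hb q ((hq C).1 hp)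
  · intro h a ha b hb p hp
    obtain ⟨q, hq⟩ := H.down p
    exact h a ha b hb q ((hq C).1 hp)

theorem lift_inl {G : DMG V} {a b : V} (h : G.ancestor a b) :
    G.lift.ancestor (.inl a) (.inl b) := by
  induction h with
  | refl => exact Relation.ReflTransGen.refl
  | tail _ h ih => exact Relation.ReflTransGen.tail ih ⟨_, _, h, .inl rfl⟩

theorem lift_inr {G : DMG V} {a b : V} (h : G.ancestor a b) :
    G.lift.ancestor (.inr a) (.inr b) := by
  induction h with
  | refl => exact Relation.ReflTransGen.refl
  | tail _ h ih => exact Relation.ReflTransGen.tail ih ⟨_, _, h, .inr (.inr rfl)⟩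

theorem lift_ext {G G' : DMG V} (H : SccExt G G') : SccExt G.lift G'.lift where
  bi := by simp [DMG.lift, H.bi]
  sub := by
    rintro e ⟨u, v, h, h'⟩
    exact ⟨u, v, H.sub h, h'⟩
  ext := by
    rintro a b ⟨u, v, h, h'⟩
    obtain ⟨y, hy, hu⟩ := H.ext _ _ h
    rcases h' with h' | h' | h' <;> cases h'
    · exact ⟨.inl y, ⟨lift_inl hy.1, lift_inl hy.2⟩, u, y, hu, .inl rfl⟩
    · exact ⟨.inr y, ⟨lift_inr hy.1, lift_inr hy.2⟩, u, y, hu, .inr (.inl rfl)⟩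
    · exact ⟨.inr y, ⟨lift_inr hy.1, lift_inr hy.2⟩, u, y, hu, .inr (.inr rfl)⟩

theorem lift_edge_inr {G : DMG V} {x : V} {z : V ⊕ V} (h : (Sum.inr x, z) ∈ G.lift.Ed) :
    ∃ z', z = .inr z' ∧ (x, z') ∈ G.Ed := by
  obtain ⟨u, v, h, h'⟩ := h
  rcases h' with h' | h' | h' <;> cases h'
  exact ⟨v, rfl, h⟩

theorem lift_anc_inr {G : DMG V} {x : V} {z : V ⊕ V} (h : G.lift.ancestor (.inr x) z) :
    ∃ z', z = .inr z' ∧ G.ancestor x z' := by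
  induction h with
  | refl => exact ⟨x, rfl, Relation.ReflTransGen.refl⟩
  | tail _ h ih =>
    obtain ⟨z', rfl, hz⟩ := ih
    obtain ⟨z'', rfl, hz'⟩ := lift_edge_inr h
    exact ⟨z'', rfl, anc_trans hz (anc_edge hz')⟩

theorem suffix_claim {G : DMG V} (hG : G.Ebi = ∅) (w : V) {b e : V ⊕ V} (q : G.lift.Walk b e)
    (he : e = .inr w) : ∀ u t,
    q.sigmaOpenAux ((Sum.inl '' (G.pa (G.scc w))) ∪
      ((Sum.inr '' (G.pa (G.scc w))) \ (Sum.inr '' {w}))) u t →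
    ∃ x, b = .inr x ∧ G.ancestor w x ∧ (G.ancestor x w ∨ ¬ t.headR) := by
  induction q with
  | nil v =>
    intro u t _
    exact ⟨w, he, Relation.ReflTransGen.refl, .inl Relation.ReflTransGen.refl⟩
  | cons t2 h q ih =>
    rename_i b b' c
    intro u t hq
    obtain ⟨⟨h1, h2⟩, h3⟩ := hq
    obtain ⟨x', rfl, hwx', hx'⟩ := ih he _ _ h3
    cases t2 with
    | bi =>
      obtain ⟨_, _, h, _⟩ := h
      simp [hG] at h
    | bwd =>
      obtain ⟨x, rfl, hx⟩ := lift_edge_inr h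
      have hwx : G.ancestor w x := anc_trans hwx' (anc_edge hx)
      refine ⟨x, rfl, hwx, ?_⟩
      by_cases ht : t.headR
      · left
        obtain ⟨z, hz, hxz⟩ := h1 ⟨ht, trivial⟩
        obtain ⟨z', rfl, hz'⟩ := lift_anc_inr hxz
        rcases hz with ⟨_, _, h⟩ | ⟨⟨z'', hz'', h⟩, _⟩
        · cases h
        · cases h
          obtain ⟨s, hs, hzs⟩ := hz''
          exact anc_trans hz' (anc_trans (anc_edge hzs) hs.1)
      · exact .inr ht
    | fwd =>
      have hx'w : G.ancestor x' w := by simpa [LinkType.headR] using hx'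
      by_contra hcon
      have hnc : ¬ colliderAt t .fwd := fun h => h.2
      have hb : (∃ x, (x, x') ∈ G.Ed ∧ b = .inl x) ∨ (∃ x, (x, x') ∈ G.Ed ∧ b = .inr x) := by
        obtain ⟨u, v, h, h'⟩ := h
        rcases h' with h' | h' | h' <;> cases h'
        · exact .inl ⟨_, h, rfl⟩
        · exact .inr ⟨_, h, rfl⟩
      rcases hb with ⟨x, hx, rfl⟩ | ⟨x, hx, rfl⟩
      · refine h2 hnc (fun hu => ?_) (.inl ⟨x, ⟨x', ⟨hx'w, hwx'⟩, hx⟩, rfl⟩)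
        obtain ⟨_, h, _⟩ := lift_anc_inr (hu.2 rfl).1
        cases h
      · have hxw : G.ancestor x w := anc_trans (anc_edge hx) hx'w
        have hnwx : ¬ G.ancestor w x := fun h => hcon ⟨x, rfl, h, .inl hxw⟩
        refine h2 hnc (fun hu => ?_) (.inr ⟨⟨x, ⟨x', ⟨hx'w, hwx'⟩, hx⟩, rfl⟩, ?_⟩)
        · obtain ⟨_, h, h'⟩ := lift_anc_inr (hu.2 rfl).1
          cases h
          exact hnwx (anc_trans hwx' h')
        · rintro ⟨_, rfl, h⟩
          cases h
          exact hnwx Relation.ReflTransGen.refl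

theorem sep_of_no_edge {G : DMG V} (hG : G.Ebi = ∅) (v w : V)
    (h : ∀ y ∈ G.scc w, (v, y) ∉ G.Ed) : G.ESep {v} {w} (G.pa (G.scc w)) := by
  rintro _ ⟨v', hv', rfl⟩ _ ⟨w', hw', rfl⟩ p hp
  obtain rfl : v' = v := hv'
  obtain rfl : w' = w := hw'
  cases p with
  | cons t h' q =>
    obtain ⟨x, rfl, hwx, hx⟩ := suffix_claim hG _ q rfl _ _ hp
    cases t with
    | bi =>
      obtain ⟨_, _, h, _⟩ := h'
      simp [hG] at h
    | bwd =>
      obtain ⟨_, h, _⟩ := lift_edge_inr h'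
      cases h
    | fwd =>
      have hxw : G.ancestor x w' := by simpa [LinkType.headR] using hx
      obtain ⟨u, v, h1, h2⟩ := h'
      rcases h2 with h2 | h2 | h2 <;> cases h2
      exact h _ ⟨hxw, hwx⟩ h1

/-- Every E-separation Markov equivalence class of directed graphs contains a greatest
element with respect to edge-set inclusion. -/
theorem greatest_markov_equivalent_DG {V : Type} [Fintype V] (G : DMG V)
    (hG : G.Ebi = ∅) :
    ∃ Ghat : DMG V, Ghat.Ebi = ∅ ∧ Ghat.IE = G.IE ∧
      ∀ G' : DMG V, G'.Ebi = ∅ → G'.IE = G.IE → G'.Ed ⊆ Ghat.Ed := by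
  refine ⟨⟨{e | ∃ y ∈ G.scc e.2, (e.1, y) ∈ G.Ed}, ∅⟩, rfl, ?_, ?_⟩
  · have H : SccExt G ⟨{e | ∃ y ∈ G.scc e.2, (e.1, y) ∈ G.Ed}, ∅⟩ :=
      ⟨hG, fun e he => ⟨e.2, ⟨Relation.ReflTransGen.refl, Relation.ReflTransGen.refl⟩, he⟩,
        fun a b h => h⟩
    ext t
    exact (lift_ext H).sep_iff _ _ _
  · rintro G' - hIE ⟨v, w⟩ hvw
    by_contra hcon
    have hs : (({v}, {w}, G.pa (G.scc w)) : Set V × Set V × Set V) ∈ G.IE :=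
      sep_of_no_edge hG v w fun y hy hvy => hcon ⟨y, hy, hvy⟩
    rw [← hIE] at hs
    exact hs (.inl v) ⟨v, rfl, rfl⟩ (.inr w) ⟨w, rfl, rfl⟩
      (.cons .fwd (show _ ∈ G'.lift.Ed from ⟨v, w, hvw, .inr (.inl rfl)⟩) (.nil _)) trivial

end ESepPaper
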